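/- Let α, σ ∈ (0,2) with α + σ > 3/2 and assume α ≠ 3/2 and σ ≠ 3/2. Then there exists a constant C such that for all x ∈ ℝ² with r = |x| ≥ 2, the integral over x₀ ∈ ℝ² of r₁^{-α} r₀^{-σ} e^{r - r₁ - r₀} dx₀ is bounded by C (r^{-(α+σ-3/2)} + r^{-α} + r^{-σ}), where r₀ = |x₀| and r₁ = |x - x₀|. -/

import Mathlib

open Real MeasureTheory

/-!
Split the space into the half-space of points `z` nearer to the origin than to `x` and its mirror
image under `z ↦ x - z`, which exchanges `α` and `σ`. On the first half `‖x - z‖ ≥ ‖x‖ / 2` and the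
exponent is at most `⟪x, z⟫ / ‖x‖ - ‖z‖`. In polar coordinates around the axis `x`, the exponential
of the latter has mass `O(min(1, ρ^{-1/2}))` on the circle of radius `ρ`, because only angles of
size `ρ^{-1/2}` contribute. So the disc `‖z‖ ≤ ‖x‖` gives at most a multiple of
`‖x‖^{-α} ∫₀^{‖x‖} ρ^{1-σ} min(1, ρ^{-1/2}) dρ`, which is where `σ ≠ 3/2` enters. Outside the disc
the exponent is at most `-‖z‖ / 2`, and the contribution is `O(‖x‖^{-α})`.
-/

open Metric Set Module
open scoped ENNReal NNReal RealInnerProductSpace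

section Radial

lemma setLIntegral_Ioc_ofReal_rpow {a b s : ℝ} (ha : 0 ≤ a) (hab : a ≤ b)
    (h : -1 < s ∨ s ≠ -1 ∧ 0 < a) :
    ∫⁻ ρ in Ioc a b, ENNReal.ofReal (ρ ^ s) =
      ENNReal.ofReal ((b ^ (s + 1) - a ^ (s + 1)) / (s + 1)) := by
  have h' : -1 < s ∨ s ≠ -1 ∧ (0 : ℝ) ∉ uIcc a b :=
    h.imp_right (And.imp_right fun ha' h0 ↦ ha'.not_ge (uIcc_of_le hab ▸ h0).1)
  have integrable : IntegrableOn (fun ρ : ℝ ↦ ρ ^ s) (Ioc a b) := by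
    rw [← intervalIntegrable_iff_integrableOn_Ioc_of_le hab]
    exact h'.elim intervalIntegral.intervalIntegrable_rpow'
      fun h ↦ intervalIntegral.intervalIntegrable_rpow (.inr h.2)
  have nonneg : 0 ≤ᵐ[volume.restrict (Ioc a b)] fun ρ : ℝ ↦ ρ ^ s := by
    filter_upwards [ae_restrict_mem measurableSet_Ioc] with ρ hρ
    exact rpow_nonneg (ha.trans hρ.1.le) s
  rw [← ofReal_integral_eq_lintegral_ofReal integrable nonneg,
    ← intervalIntegral.integral_of_le hab, integral_rpow h']

lemma setLIntegral_Ioc_zero_one_ofReal_rpow {s : ℝ} (hs : -1 < s) :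
    ∫⁻ ρ in Ioc 0 1, ENNReal.ofReal (ρ ^ s) = ENNReal.ofReal (s + 1)⁻¹ := by
  rw [setLIntegral_Ioc_ofReal_rpow le_rfl zero_le_one (.inl hs), one_rpow,
    zero_rpow (by linarith), sub_zero, one_div]

lemma setLIntegral_Ioc_one_ofReal_rpow_le {s r : ℝ} (hs : s ≠ -1) (hr : 0 ≤ r) :
    ∫⁻ ρ in Ioc 1 r, ENNReal.ofReal (ρ ^ s) ≤ ENNReal.ofReal (|s + 1|⁻¹ * (1 + r ^ (s + 1))) := by
  rcases le_total r 1 with hr1 | hr1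
  · simp [Ioc_eq_empty_of_le hr1]
  rw [setLIntegral_Ioc_ofReal_rpow zero_le_one hr1 (.inr ⟨hs, one_pos⟩), one_rpow]
  refine ENNReal.ofReal_le_ofReal ((le_abs_self _).trans ?_)
  rw [abs_div, div_eq_inv_mul]
  gcongr
  have : 0 ≤ r ^ (s + 1) := rpow_nonneg hr _
  exact abs_le.2 ⟨by linarith, by linarith⟩

end Radial

section Angular

/-- The mass of `exp (re z - ‖z‖)` on the circle of radius `ρ` in `ℂ`, with respect to the angle;
in terms of the modified Bessel function it equals `2π e^{-ρ} I₀(ρ)`. -/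
noncomputable def angularMass (ρ : ℝ) : ℝ≥0∞ :=
  ∫⁻ θ in Ioo (-π) π, ENNReal.ofReal (exp (ρ * cos θ - ρ))

lemma angularMass_le_two_pi {ρ : ℝ} (hρ : 0 ≤ ρ) : angularMass ρ ≤ ENNReal.ofReal (2 * π) :=
  calc angularMass ρ ≤ ∫⁻ _ in Ioo (-π) π, 1 := by
        refine lintegral_mono fun θ ↦ ENNReal.ofReal_le_one.2 (exp_le_one_iff.2 ?_)
        exact sub_nonpos.2 (mul_le_of_le_one_right hρ (cos_le_one θ))
    _ = ENNReal.ofReal (2 * π) := by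
        rw [setLIntegral_const, one_mul, volume_Ioo, sub_neg_eq_add, two_mul]

-- Jordan's inequality `cos θ ≤ 1 - 2θ²/π²` dominates the integrand by a Gaussian.
lemma angularMass_le_rpow {ρ : ℝ} (hρ : 0 < ρ) :
    angularMass ρ ≤ ENNReal.ofReal (√(π ^ 3 / 2) * ρ ^ (-(1 / 2) : ℝ)) := by
  have hb : 0 < 2 * ρ / π ^ 2 := by positivity
  calc angularMass ρ
      ≤ ∫⁻ θ in Ioo (-π) π, ENNReal.ofReal (exp (-(2 * ρ / π ^ 2) * θ ^ 2)) := by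
        refine setLIntegral_mono' measurableSet_Ioo fun θ hθ ↦ ?_
        gcongr
        calc ρ * cos θ - ρ ≤ ρ * (1 - 2 / π ^ 2 * θ ^ 2) - ρ := by
              gcongr
              exact cos_le_one_sub_mul_cos_sq (abs_le.2 ⟨hθ.1.le, hθ.2.le⟩)
          _ = -(2 * ρ / π ^ 2) * θ ^ 2 := by ring
    _ ≤ ∫⁻ θ, ENNReal.ofReal (exp (-(2 * ρ / π ^ 2) * θ ^ 2)) := setLIntegral_le_lintegral _ _
    _ = ENNReal.ofReal √(π / (2 * ρ / π ^ 2)) := by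
        rw [← ofReal_integral_eq_lintegral_ofReal (integrable_exp_neg_mul_sq hb)
          (.of_forall fun _ ↦ (exp_pos _).le), integral_gaussian]
    _ = ENNReal.ofReal (√(π ^ 3 / 2) * ρ ^ (-(1 / 2) : ℝ)) := by
        rw [rpow_neg hρ.le, ← sqrt_eq_rpow, ← sqrt_inv, ← sqrt_mul (by positivity)]
        congr 2
        field_simp

lemma setLIntegral_Ioc_zero_one_rpow_mul_angularMass_le {σ : ℝ} (hσ : σ < 2) :
    ∫⁻ ρ in Ioc 0 1, ENNReal.ofReal (ρ ^ (1 - σ)) * angularMass ρ ≤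
      ENNReal.ofReal (2 * π * (2 - σ)⁻¹) :=
  calc ∫⁻ ρ in Ioc 0 1, ENNReal.ofReal (ρ ^ (1 - σ)) * angularMass ρ
      ≤ ∫⁻ ρ in Ioc 0 1, ENNReal.ofReal (ρ ^ (1 - σ)) * ENNReal.ofReal (2 * π) := by
        refine setLIntegral_mono' measurableSet_Ioc fun ρ hρ ↦ ?_
        gcongr
        exact angularMass_le_two_pi hρ.1.le
    _ = ENNReal.ofReal (2 * π * (2 - σ)⁻¹) := by
        rw [lintegral_mul_const' _ _ ENNReal.ofReal_ne_top, mul_comm,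
          setLIntegral_Ioc_zero_one_ofReal_rpow (by linarith),
          ← ENNReal.ofReal_mul (by positivity), show 1 - σ + 1 = 2 - σ by ring]

lemma setLIntegral_Ioc_one_rpow_mul_angularMass_le {σ r : ℝ} (hσ : σ ≠ 3 / 2) (hr : 0 ≤ r) :
    ∫⁻ ρ in Ioc 1 r, ENNReal.ofReal (ρ ^ (1 - σ)) * angularMass ρ ≤
      ENNReal.ofReal (√(π ^ 3 / 2) * |3 / 2 - σ|⁻¹ * (1 + r ^ (3 / 2 - σ))) := by
  set K : ℝ := √(π ^ 3 / 2)
  calc ∫⁻ ρ in Ioc 1 r, ENNReal.ofReal (ρ ^ (1 - σ)) * angularMass ρ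
      ≤ ∫⁻ ρ in Ioc 1 r, ENNReal.ofReal K * ENNReal.ofReal (ρ ^ (1 / 2 - σ)) := by
        refine setLIntegral_mono' measurableSet_Ioc fun ρ hρ ↦ ?_
        have hρ0 : 0 < ρ := one_pos.trans hρ.1
        calc ENNReal.ofReal (ρ ^ (1 - σ)) * angularMass ρ
            ≤ ENNReal.ofReal (ρ ^ (1 - σ)) * ENNReal.ofReal (K * ρ ^ (-(1 / 2) : ℝ)) := by
              gcongr
              exact angularMass_le_rpow hρ0
          _ = ENNReal.ofReal K * ENNReal.ofReal (ρ ^ (1 / 2 - σ)) := by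
              rw [← ENNReal.ofReal_mul (by positivity), ← ENNReal.ofReal_mul (by positivity),
                mul_left_comm, ← rpow_add hρ0]
              ring_nf
    _ ≤ ENNReal.ofReal K * ENNReal.ofReal (|3 / 2 - σ|⁻¹ * (1 + r ^ (3 / 2 - σ))) := by
        rw [lintegral_const_mul' _ _ ENNReal.ofReal_ne_top,
          show 3 / 2 - σ = 1 / 2 - σ + 1 by ring]
        gcongr
        exact setLIntegral_Ioc_one_ofReal_rpow_le (fun h ↦ hσ (by linarith)) hr
    _ = ENNReal.ofReal (K * |3 / 2 - σ|⁻¹ * (1 + r ^ (3 / 2 - σ))) := by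
        rw [← ENNReal.ofReal_mul (by positivity), mul_assoc]

lemma exists_setLIntegral_rpow_mul_angularMass_le {σ : ℝ} (hσ : σ < 2) (hσ' : σ ≠ 3 / 2) :
    ∃ C : ℝ≥0, ∀ r, 0 ≤ r → ∫⁻ ρ in Ioc 0 r, ENNReal.ofReal (ρ ^ (1 - σ)) * angularMass ρ ≤
      C * ENNReal.ofReal (1 + r ^ (3 / 2 - σ)) := by
  set A : ℝ := 2 * π * (2 - σ)⁻¹
  set B : ℝ := √(π ^ 3 / 2) * |3 / 2 - σ|⁻¹
  have hA : 0 ≤ A := mul_nonneg (by positivity) (inv_nonneg.2 (by linarith))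
  refine ⟨(A + B).toNNReal, fun r hr ↦ ?_⟩
  have hp : 0 ≤ r ^ (3 / 2 - σ) := by positivity
  calc ∫⁻ ρ in Ioc 0 r, ENNReal.ofReal (ρ ^ (1 - σ)) * angularMass ρ
      ≤ ∫⁻ ρ in Ioc 0 1 ∪ Ioc 1 r, ENNReal.ofReal (ρ ^ (1 - σ)) * angularMass ρ :=
        lintegral_mono_set Ioc_subset_Ioc_union_Ioc
    _ ≤ ENNReal.ofReal A + ENNReal.ofReal (B * (1 + r ^ (3 / 2 - σ))) :=
        (lintegral_union_le _ _ _).trans (add_le_add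
          (setLIntegral_Ioc_zero_one_rpow_mul_angularMass_le hσ)
          (setLIntegral_Ioc_one_rpow_mul_angularMass_le hσ' hr))
    _ ≤ ENNReal.ofReal (A + B) * ENNReal.ofReal (1 + r ^ (3 / 2 - σ)) := by
        rw [← ENNReal.ofReal_add hA (by positivity), ← ENNReal.ofReal_mul (by positivity), add_mul]
        gcongr
        exact le_mul_of_one_le_right hA (le_add_of_nonneg_right hp)

end Angular

section Polar

lemma setLIntegral_closedBall_le_polar (f : ℂ → ℝ≥0∞) (r : ℝ) :
    ∫⁻ z in closedBall 0 r, f z ≤ ∫⁻ ρ in Ioc 0 r, ∫⁻ θ in Ioo (-π) π,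
      ENNReal.ofReal ρ * f (Complex.polarCoord.symm (ρ, θ)) := by
  set g : ℝ × ℝ → ℝ≥0∞ := fun p ↦ ENNReal.ofReal p.1 * f (Complex.polarCoord.symm p)
  have indicator_polar : ∀ p ∈ polarCoord.target,
      ENNReal.ofReal p.1 • (closedBall 0 r).indicator f (Complex.polarCoord.symm p) =
        (Iic r ×ˢ univ).indicator g p := by
    intro p hp
    have hp0 : |p.1| = p.1 := abs_of_pos hp.1
    by_cases hpr : p.1 ≤ r <;> simp [indicator, hp0, hpr, g]
  calc ∫⁻ z in closedBall 0 r, f z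
      = ∫⁻ p in polarCoord.target, (Iic r ×ˢ univ).indicator g p := by
        rw [← lintegral_indicator measurableSet_closedBall,
          ← Complex.lintegral_comp_polarCoord_symm]
        exact setLIntegral_congr_fun polarCoord.open_target.measurableSet indicator_polar
    _ = ∫⁻ p in Ioc 0 r ×ˢ Ioo (-π) π, g p := by
        rw [setLIntegral_indicator (measurableSet_Iic.prod .univ), polarCoord_target,
          prod_inter_prod, univ_inter, inter_comm, Ioi_inter_Iic]
    _ ≤ ∫⁻ ρ in Ioc 0 r, ∫⁻ θ in Ioo (-π) π, g (ρ, θ) := by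
        rw [Measure.volume_eq_prod, ← Measure.prod_restrict]
        exact lintegral_prod_le _

lemma re_complex_polarCoord_symm (ρ θ : ℝ) :
    (Complex.polarCoord.symm (ρ, θ)).re = ρ * cos θ := by
  simp [Complex.polarCoord_symm_apply, Complex.cos_ofReal_re]

lemma setLIntegral_closedBall_rpow_mul_exp_le_angularMass (σ r : ℝ) :
    ∫⁻ z : ℂ in closedBall 0 r, ENNReal.ofReal (‖z‖ ^ (-σ) * exp (z.re - ‖z‖)) ≤
      ∫⁻ ρ in Ioc 0 r, ENNReal.ofReal (ρ ^ (1 - σ)) * angularMass ρ := by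
  refine (setLIntegral_closedBall_le_polar _ r).trans_eq ?_
  refine setLIntegral_congr_fun measurableSet_Ioc fun ρ hρ ↦ ?_
  have hρ0 : 0 < ρ := hρ.1
  rw [angularMass, ← lintegral_const_mul' _ _ ENNReal.ofReal_ne_top]
  refine lintegral_congr fun θ ↦ ?_
  rw [Complex.norm_polarCoord_symm, abs_of_pos hρ0, re_complex_polarCoord_symm,
    ← ENNReal.ofReal_mul hρ0.le, ← ENNReal.ofReal_mul (by positivity), ← mul_assoc,
    sub_eq_add_neg 1 σ, rpow_add hρ0, rpow_one]

end Polar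

lemma integrable_norm_rpow_mul_exp_neg_mul_norm {E : Type*} [NormedAddCommGroup E]
    [NormedSpace ℝ E] [Nontrivial E] [FiniteDimensional ℝ E] [MeasurableSpace E] [BorelSpace E]
    (μ : Measure E) [μ.IsAddHaarMeasure] {s b : ℝ} (hs : -(finrank ℝ E : ℝ) < s) (hb : 0 < b) :
    Integrable (fun z : E ↦ ‖z‖ ^ s * exp (-b * ‖z‖)) μ := by
  rw [integrable_fun_norm_addHaar μ (f := fun ρ ↦ ρ ^ s * exp (-b * ρ))]
  have radial : IntegrableOn (fun ρ : ℝ ↦ ρ ^ (finrank ℝ E - 1 + s) * exp (-b * ρ ^ (1 : ℝ)))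
      (Ioi 0) := integrableOn_rpow_mul_exp_neg_mul_rpow (by linarith) one_pos hb
  refine radial.congr_fun (fun ρ hρ ↦ ?_) measurableSet_Ioi
  have hρ0 : 0 < ρ := hρ
  beta_reduce
  rw [rpow_one, smul_eq_mul, ← mul_assoc, rpow_add hρ0, ← rpow_natCast,
    Nat.cast_pred finrank_pos]

lemma half_norm_le_norm_sub {E : Type*} [SeminormedAddCommGroup E] {x z : E}
    (hz : ‖z‖ ≤ ‖x - z‖) : ‖x‖ / 2 ≤ ‖x - z‖ := by
  linarith [norm_le_norm_sub_add x z]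

section InnerProductSpace

variable {E : Type*} [NormedAddCommGroup E] [InnerProductSpace ℝ E]

lemma norm_sub_norm_sub_le_inner_div_norm (x z : E) : ‖x‖ - ‖x - z‖ ≤ ⟪x, z⟫ / ‖x‖ := by
  rcases eq_or_ne x 0 with rfl | hx
  · simp
  rw [le_div_iff₀ (norm_pos_iff.2 hx)]
  have := real_inner_le_norm x (x - z)
  rw [inner_sub_right, real_inner_self_eq_norm_sq] at this
  linarith

lemma inner_div_norm_le_half_norm {x z : E} (hz : ‖z‖ ≤ ‖x - z‖) : ⟪x, z⟫ / ‖x‖ ≤ ‖x‖ / 2 := by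
  refine div_le_of_le_mul₀ (norm_nonneg x) (by positivity) ?_
  have : ‖z‖ ^ 2 ≤ ‖x - z‖ ^ 2 := by gcongr
  rw [norm_sub_sq_real] at this
  linarith

section Planar

lemma exists_complex_linearIsometryEquiv_apply_one (hE : finrank ℝ E = 2) {u : E} (hu : ‖u‖ = 1) :
    ∃ e : ℂ ≃ₗᵢ[ℝ] E, e 1 = u := by
  have : FiniteDimensional ℝ E := .of_finrank_eq_succ hE
  let e₀ : ℂ ≃ₗᵢ[ℝ] E :=
    Complex.isometryOfOrthonormal ((stdOrthonormalBasis ℝ E).reindex (finCongr hE))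
  let c : Circle := ⟨e₀.symm u, by simp [Submonoid.unitSphere, hu]⟩
  refine ⟨(rotation c).trans e₀, ?_⟩
  rw [LinearIsometryEquiv.trans_apply, rotation_apply, mul_one]
  exact e₀.apply_symm_apply u

variable [FiniteDimensional ℝ E] [MeasurableSpace E] [BorelSpace E]

lemma exists_setLIntegral_closedBall_rpow_mul_exp_inner_le (hE : finrank ℝ E = 2) {σ : ℝ}
    (hσ : σ < 2) (hσ' : σ ≠ 3 / 2) :
    ∃ C : ℝ≥0, ∀ u : E, ‖u‖ = 1 → ∀ r, 0 ≤ r →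
      ∫⁻ z in closedBall (0 : E) r, ENNReal.ofReal (‖z‖ ^ (-σ) * exp (⟪u, z⟫ - ‖z‖)) ≤
        C * ENNReal.ofReal (1 + r ^ (3 / 2 - σ)) := by
  obtain ⟨C, hC⟩ := exists_setLIntegral_rpow_mul_angularMass_le hσ hσ'
  refine ⟨C, fun u hu r hr ↦ le_of_eq_of_le ?_
    ((setLIntegral_closedBall_rpow_mul_exp_le_angularMass σ r).trans (hC r hr))⟩
  obtain ⟨e, rfl⟩ := exists_complex_linearIsometryEquiv_apply_one hE hu
  have inner_eq_re (z : ℂ) : ⟪e 1, e z⟫ = z.re := by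
    rw [e.inner_map_map, Complex.inner, map_one, mul_one]
  rw [← e.measurePreserving.setLIntegral_comp_preimage_emb
    e.toMeasurableEquiv.measurableEmbedding]
  simp only [e.preimage_closedBall, map_zero, e.norm_map, inner_eq_re]

end Planar

end InnerProductSpace

section ExcessKernel

section Normed

variable {E : Type*} [NormedAddCommGroup E]

/-- The integrand of the convolution estimate: two inverse powers, centred at `x` and at the
origin, damped by the excess `‖x - z‖ + ‖z‖ - ‖x‖` in the triangle inequality. -/
noncomputable def excessKernel (α σ : ℝ) (x z : E) : ℝ :=
  ‖x - z‖ ^ (-α) * ‖z‖ ^ (-σ) * exp (‖x‖ - ‖x - z‖ - ‖z‖)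

lemma excessKernel_nonneg (α σ : ℝ) (x z : E) : 0 ≤ excessKernel α σ x z := by
  unfold excessKernel
  positivity

lemma excessKernel_sub_right (α σ : ℝ) (x z : E) :
    excessKernel α σ x (x - z) = excessKernel σ α x z := by
  rw [excessKernel, excessKernel, sub_sub_cancel, mul_comm (‖z‖ ^ (-α)), sub_right_comm]

/-- The half-space of points at least as close to the origin as to `x`. It and its image under
`z ↦ x - z`, which exchanges the two powers of `excessKernel`, cover the space. -/
def originSide (x : E) : Set E := {z | ‖z‖ ≤ ‖x - z‖}

lemma measurableSet_originSide [MeasurableSpace E] [OpensMeasurableSpace E] (x : E) :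
    MeasurableSet (originSide x) :=
  (isClosed_le continuous_norm (by fun_prop)).measurableSet

lemma originSide_union_preimage_sub_left (x : E) :
    originSide x ∪ (x - ·) ⁻¹' originSide x = univ :=
  eq_univ_of_forall fun z ↦ by simpa [originSide] using le_total ‖z‖ ‖x - z‖

end Normed

variable {E : Type*} [NormedAddCommGroup E] [InnerProductSpace ℝ E]

lemma excessKernel_le_mul_exp_inner {α : ℝ} (hα : 0 ≤ α) (σ : ℝ) {x z : E} (hx : x ≠ 0)
    (hz : z ∈ originSide x) :
    excessKernel α σ x z ≤
      (‖x‖ / 2) ^ (-α) * (‖z‖ ^ (-σ) * exp (⟪x, z⟫ / ‖x‖ - ‖z‖)) := by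
  have radius_pos : 0 < ‖x‖ / 2 := half_pos (norm_pos_iff.2 hx)
  rw [excessKernel, mul_assoc]
  gcongr ?_ * (_ * exp (?_ - _))
  · exact rpow_le_rpow_of_nonpos radius_pos (half_norm_le_norm_sub hz) (neg_nonpos.2 hα)
  · exact norm_sub_norm_sub_le_inner_div_norm x z

lemma excessKernel_le_mul_exp_neg_half_norm {α : ℝ} (hα : 0 ≤ α) (σ : ℝ) {x z : E} (hx : x ≠ 0)
    (hz : z ∈ originSide x) (hxz : ‖x‖ ≤ ‖z‖) :
    excessKernel α σ x z ≤ (‖x‖ / 2) ^ (-α) * (‖z‖ ^ (-σ) * exp (-(1 / 2) * ‖z‖)) := by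
  refine (excessKernel_le_mul_exp_inner hα σ hx hz).trans ?_
  gcongr
  linarith [inner_div_norm_le_half_norm hz]

variable [FiniteDimensional ℝ E] [MeasurableSpace E] [BorelSpace E]

lemma setLIntegral_preimage_sub_left_excessKernel (α σ : ℝ) (x : E) (S : Set E) :
    ∫⁻ z in (x - ·) ⁻¹' S, ENNReal.ofReal (excessKernel α σ x z) =
      ∫⁻ z in S, ENNReal.ofReal (excessKernel σ α x z) := by
  simpa only [excessKernel_sub_right] using
    (volume.measurePreserving_sub_left x).setLIntegral_comp_preimage_emb
      (MeasurableEquiv.subLeft x).measurableEmbedding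
      (fun z ↦ ENNReal.ofReal (excessKernel σ α x z)) S

lemma exists_setLIntegral_originSide_inter_closedBall_le (hE : finrank ℝ E = 2) {α σ : ℝ}
    (hα : 0 ≤ α) (hσ : σ < 2) (hσ' : σ ≠ 3 / 2) :
    ∃ C : ℝ≥0, ∀ x : E, x ≠ 0 →
      ∫⁻ z in originSide x ∩ closedBall 0 ‖x‖, ENNReal.ofReal (excessKernel α σ x z) ≤
        C * ENNReal.ofReal ((‖x‖ / 2) ^ (-α) * (1 + ‖x‖ ^ (3 / 2 - σ))) := by
  obtain ⟨C, hC⟩ := exists_setLIntegral_closedBall_rpow_mul_exp_inner_le hE hσ hσ'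
  refine ⟨C, fun x hx ↦ ?_⟩
  set u : E := ‖x‖⁻¹ • x
  set c : ℝ := (‖x‖ / 2) ^ (-α)
  have hc : 0 ≤ c := by positivity
  calc ∫⁻ z in originSide x ∩ closedBall 0 ‖x‖, ENNReal.ofReal (excessKernel α σ x z)
      ≤ ∫⁻ z in originSide x ∩ closedBall 0 ‖x‖,
          ENNReal.ofReal c * ENNReal.ofReal (‖z‖ ^ (-σ) * exp (⟪u, z⟫ - ‖z‖)) := by
        refine setLIntegral_mono' ((measurableSet_originSide x).inter measurableSet_closedBall)
          fun z hz ↦ ?_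
        rw [← ENNReal.ofReal_mul hc, real_inner_smul_left, ← div_eq_inv_mul]
        exact ENNReal.ofReal_le_ofReal (excessKernel_le_mul_exp_inner hα σ hx hz.1)
    _ ≤ ∫⁻ z in closedBall 0 ‖x‖,
          ENNReal.ofReal c * ENNReal.ofReal (‖z‖ ^ (-σ) * exp (⟪u, z⟫ - ‖z‖)) :=
        lintegral_mono_set inter_subset_right
    _ ≤ ENNReal.ofReal c * (C * ENNReal.ofReal (1 + ‖x‖ ^ (3 / 2 - σ))) := by
        rw [lintegral_const_mul' _ _ ENNReal.ofReal_ne_top]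
        gcongr
        exact hC u (norm_smul_inv_norm hx) ‖x‖ (norm_nonneg x)
    _ = C * ENNReal.ofReal (c * (1 + ‖x‖ ^ (3 / 2 - σ))) := by
        rw [ENNReal.ofReal_mul hc, mul_left_comm]

lemma exists_setLIntegral_originSide_diff_closedBall_le [Nontrivial E] {α σ : ℝ} (hα : 0 ≤ α)
    (hσ : σ < finrank ℝ E) :
    ∃ C : ℝ≥0, ∀ x : E, x ≠ 0 →
      ∫⁻ z in originSide x \ closedBall 0 ‖x‖, ENNReal.ofReal (excessKernel α σ x z) ≤
        C * ENNReal.ofReal ((‖x‖ / 2) ^ (-α)) := by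
  have finite : ∫⁻ z : E, ENNReal.ofReal (‖z‖ ^ (-σ) * exp (-(1 / 2) * ‖z‖)) ≠ ∞ :=
    (integrable_norm_rpow_mul_exp_neg_mul_norm volume (neg_lt_neg hσ)
      one_half_pos).lintegral_lt_top.ne
  refine ⟨(∫⁻ z : E, ENNReal.ofReal (‖z‖ ^ (-σ) * exp (-(1 / 2) * ‖z‖))).toNNReal,
    fun x hx ↦ ?_⟩
  rw [ENNReal.coe_toNNReal finite, ← lintegral_mul_const' _ _ ENNReal.ofReal_ne_top]
  refine (setLIntegral_mono' ((measurableSet_originSide x).diff measurableSet_closedBall)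
    fun z hz ↦ ?_).trans (setLIntegral_le_lintegral _ _)
  have hxz : ‖x‖ ≤ ‖z‖ := (not_le.1 (mem_closedBall_zero_iff.not.1 hz.2)).le
  rw [mul_comm, ← ENNReal.ofReal_mul (by positivity)]
  exact ENNReal.ofReal_le_ofReal (excessKernel_le_mul_exp_neg_half_norm hα σ hx hz.1 hxz)

lemma exists_setLIntegral_originSide_le (hE : finrank ℝ E = 2) {α σ : ℝ} (hα : 0 ≤ α)
    (hσ : σ < 2) (hσ' : σ ≠ 3 / 2) :
    ∃ C : ℝ≥0, ∀ x : E, x ≠ 0 →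
      ∫⁻ z in originSide x, ENNReal.ofReal (excessKernel α σ x z) ≤
        C * ENNReal.ofReal (‖x‖ ^ (-(α + σ - 3 / 2)) + ‖x‖ ^ (-α)) := by
  have : Nontrivial E := nontrivial_of_finrank_eq_succ hE
  obtain ⟨A, hA⟩ := exists_setLIntegral_originSide_inter_closedBall_le hE hα hσ hσ'
  obtain ⟨B, hB⟩ := exists_setLIntegral_originSide_diff_closedBall_le (E := E) hα
    (hσ.trans_eq (by rw [hE, Nat.cast_ofNat]))
  refine ⟨(A + B) * (2 ^ α : ℝ).toNNReal, fun x hx ↦ ?_⟩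
  have hx0 : 0 < ‖x‖ := norm_pos_iff.2 hx
  have hc : (‖x‖ / 2) ^ (-α) = 2 ^ α * ‖x‖ ^ (-α) := by
    rw [div_rpow hx0.le zero_le_two, rpow_neg zero_le_two, div_inv_eq_mul, mul_comm]
  set c : ℝ := (‖x‖ / 2) ^ (-α)
  have scale : c * (1 + ‖x‖ ^ (3 / 2 - σ)) =
      2 ^ α * (‖x‖ ^ (-(α + σ - 3 / 2)) + ‖x‖ ^ (-α)) := by
    rw [hc, show -(α + σ - 3 / 2) = -α + (3 / 2 - σ) by ring, rpow_add hx0]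
    ring
  calc ∫⁻ z in originSide x, ENNReal.ofReal (excessKernel α σ x z)
      ≤ A * ENNReal.ofReal (c * (1 + ‖x‖ ^ (3 / 2 - σ))) + B * ENNReal.ofReal c := by
        rw [← lintegral_inter_add_sdiff _ _ measurableSet_closedBall]
        exact add_le_add (hA x hx) (hB x hx)
    _ ≤ A * ENNReal.ofReal (c * (1 + ‖x‖ ^ (3 / 2 - σ))) +
          B * ENNReal.ofReal (c * (1 + ‖x‖ ^ (3 / 2 - σ))) := by
        gcongr
        exact le_mul_of_one_le_right (by positivity) (le_add_of_nonneg_right (by positivity))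
    _ = ((A + B) * (2 ^ α : ℝ).toNNReal : ℝ≥0) *
          ENNReal.ofReal (‖x‖ ^ (-(α + σ - 3 / 2)) + ‖x‖ ^ (-α)) := by
        rw [← add_mul, scale, ENNReal.ofReal_mul (by positivity), ← mul_assoc,
          ENNReal.coe_mul, ENNReal.coe_add]
        rfl

lemma exists_lintegral_excessKernel_le (hE : finrank ℝ E = 2) {α σ : ℝ} (hα : α ∈ Ico 0 2)
    (hσ : σ ∈ Ico 0 2) (hα' : α ≠ 3 / 2) (hσ' : σ ≠ 3 / 2) :
    ∃ C : ℝ≥0, ∀ x : E, x ≠ 0 → ∫⁻ z, ENNReal.ofReal (excessKernel α σ x z) ≤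
      C * ENNReal.ofReal (‖x‖ ^ (-(α + σ - 3 / 2)) + ‖x‖ ^ (-α) + ‖x‖ ^ (-σ)) := by
  obtain ⟨A, hA⟩ := exists_setLIntegral_originSide_le hE hα.1 hσ.2 hσ'
  obtain ⟨B, hB⟩ := exists_setLIntegral_originSide_le hE hσ.1 hα.2 hα'
  refine ⟨A + B, fun x hx ↦ ?_⟩
  have hα0 : 0 ≤ ‖x‖ ^ (-α) := by positivity
  have hσ0 : 0 ≤ ‖x‖ ^ (-σ) := by positivity
  calc ∫⁻ z, ENNReal.ofReal (excessKernel α σ x z)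
      ≤ (∫⁻ z in originSide x, ENNReal.ofReal (excessKernel α σ x z)) +
          ∫⁻ z in (x - ·) ⁻¹' originSide x, ENNReal.ofReal (excessKernel α σ x z) := by
        rw [← setLIntegral_univ, ← originSide_union_preimage_sub_left x]
        exact lintegral_union_le _ _ _
    _ ≤ A * ENNReal.ofReal (‖x‖ ^ (-(α + σ - 3 / 2)) + ‖x‖ ^ (-α)) +
          B * ENNReal.ofReal (‖x‖ ^ (-(σ + α - 3 / 2)) + ‖x‖ ^ (-σ)) := by
        rw [setLIntegral_preimage_sub_left_excessKernel]
        exact add_le_add (hA x hx) (hB x hx)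
    _ ≤ (A + B : ℝ≥0) *
          ENNReal.ofReal (‖x‖ ^ (-(α + σ - 3 / 2)) + ‖x‖ ^ (-α) + ‖x‖ ^ (-σ)) := by
        rw [ENNReal.coe_add, add_mul, add_comm σ α]
        gcongr _ * ENNReal.ofReal ?_ + _ * ENNReal.ofReal ?_ <;> linarith

theorem stmt4_general (hE : finrank ℝ E = 2) {α σ : ℝ} (hα : α ∈ Ico 0 2) (hσ : σ ∈ Ico 0 2)
    (hα' : α ≠ 3 / 2) (hσ' : σ ≠ 3 / 2) :
    ∃ C : ℝ, ∀ x : E, x ≠ 0 →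
      Integrable (fun z : E ↦ ‖x - z‖ ^ (-α) * ‖z‖ ^ (-σ) * exp (‖x‖ - ‖x - z‖ - ‖z‖)) ∧
      ∫ z : E, ‖x - z‖ ^ (-α) * ‖z‖ ^ (-σ) * exp (‖x‖ - ‖x - z‖ - ‖z‖) ≤
        C * (‖x‖ ^ (-(α + σ - 3 / 2)) + ‖x‖ ^ (-α) + ‖x‖ ^ (-σ)) := by
  obtain ⟨C, hC⟩ := exists_lintegral_excessKernel_le hE hα hσ hα' hσ'
  refine ⟨C, fun x hx ↦ ?_⟩
  have measurable : AEStronglyMeasurable (excessKernel α σ x) := by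
    unfold excessKernel
    fun_prop
  have nonneg : 0 ≤ᵐ[volume] excessKernel α σ x := .of_forall (excessKernel_nonneg α σ x)
  have bound := hC x hx
  rw [← ENNReal.ofReal_coe_nnreal, ← ENNReal.ofReal_mul C.coe_nonneg] at bound
  refine ⟨(lintegral_ofReal_ne_top_iff_integrable measurable nonneg).1
    (ne_top_of_le_ne_top ENNReal.ofReal_ne_top bound), ?_⟩
  exact (integral_eq_lintegral_of_nonneg_ae nonneg measurable).trans_le
    (ENNReal.toReal_le_of_le_ofReal (by positivity) bound)

end ExcessKernel

/-- Convolution-type estimate: for α, σ ∈ (0,2) with α + σ > 3/2,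
α ≠ 3/2, σ ≠ 3/2, there is C such that for all x with ‖x‖ ≥ 2,
∫ ‖x - x₀‖^{-α} ‖x₀‖^{-σ} e^{‖x‖ - ‖x - x₀‖ - ‖x₀‖} dx₀
  ≤ C (‖x‖^{-(α+σ-3/2)} + ‖x‖^{-α} + ‖x‖^{-σ}). -/
theorem stmt4 (α σ : ℝ) (hα : α ∈ Set.Ioo (0 : ℝ) 2) (hσ : σ ∈ Set.Ioo (0 : ℝ) 2)
    (hsum : 3 / 2 < α + σ) (hα' : α ≠ 3 / 2) (hσ' : σ ≠ 3 / 2) :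
    ∃ C : ℝ, ∀ x : EuclideanSpace ℝ (Fin 2), 2 ≤ ‖x‖ →
      (∫ x₀ : EuclideanSpace ℝ (Fin 2),
        ‖x - x₀‖ ^ (-α) * ‖x₀‖ ^ (-σ) * Real.exp (‖x‖ - ‖x - x₀‖ - ‖x₀‖)) ≤
      C * (‖x‖ ^ (-(α + σ - 3 / 2)) + ‖x‖ ^ (-α) + ‖x‖ ^ (-σ)) := by
  obtain ⟨C, hC⟩ := stmt4_general (E := EuclideanSpace ℝ (Fin 2)) finrank_euclideanSpace_fin
    ⟨hα.1.le, hα.2⟩ ⟨hσ.1.le, hσ.2⟩ hα' hσ'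
  exact ⟨C, fun x hx ↦ (hC x (norm_pos_iff.1 (two_pos.trans_le hx))).2⟩
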